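/- arXiv:1108.4400 — 2 statements merged into one kernel-verified Lean document; each statement's English description precedes it below -/
import Mathlib

section
/- On ℝ with Lebesgue measure, the sequence g_n = (−1)^n · χ_{[n, ∞)} (where χ_{[n, ∞)} is the indicator function of the interval [n, ∞)) converges pointwise almost everywhere (in fact, for every x the sequence (g_n(x)) is Cauchy), but does not converge AUM. -/
open MeasureTheory

/-!
Let `g n = (-1) ^ n * χ_{A n}` for a decreasing sequence of sets `A n`. A point outside `⋂ n, A n`
leaves the sets for good, so `g n` is eventually `0` there. A point of `A (M + 1)` lies in `A m` and
in `A (m + 1)` for every `m ≤ M`, so `g` jumps by `2` from `m` to `m + 1` for all these `m` at once.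
With `F m = m + 1`, AUM convergence therefore forces `μ (A n) → 0`, whereas the half-lines `[n, ∞)`
all have infinite length.
-/

open Filter Set Topology

section ConvergesAUM

variable {X E : Type*} [PseudoMetricSpace E]

/-- The points at which `f` fluctuates by at least `ε` on each of the windows `[m, F m]`, `m ≤ M`:
the exceptional set in the definition of AUM convergence. -/
def fluctuationSet (f : ℕ → X → E) (ε : ℝ) (F : ℕ → ℕ) (M : ℕ) : Set X :=
  {x | ∀ m ≤ M, ∃ n ∈ Icc m (F m), ∃ n' ∈ Icc m (F m), ε ≤ dist (f n x) (f n' x)}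

/-- Almost uniform metastable pointwise convergence of the sequence `f` with respect to `μ`. -/
def ConvergesAUM [MeasurableSpace X] (μ : Measure X) (f : ℕ → X → E) : Prop :=
  ∀ lam : ℝ, 0 < lam → ∀ ε : ℝ, 0 < ε → ∀ F : ℕ → ℕ, ∃ M : ℕ,
    μ (fluctuationSet f ε F M) < ENNReal.ofReal lam

lemma mem_fluctuationSet_of_le_dist_succ {f : ℕ → X → E} {ε : ℝ} {F : ℕ → ℕ} {M : ℕ} {x : X}
    (hF : ∀ m ≤ M, m < F m) (hf : ∀ m ≤ M, ε ≤ dist (f m x) (f (m + 1) x)) :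
    x ∈ fluctuationSet f ε F M := fun m hm ↦
  ⟨m, left_mem_Icc.2 (hF m hm).le, m + 1, ⟨m.le_succ, hF m hm⟩, hf m hm⟩

end ConvergesAUM

section AlternatingIndicator

variable {X : Type*} {A : ℕ → Set X}

/-- The sequence of functions `(-1) ^ n * χ_{A n}`, for a sequence of sets `A n`. -/
noncomputable def alternatingIndicator (A : ℕ → Set X) (n : ℕ) (x : X) : ℝ :=
  (-1) ^ n * (A n).indicator 1 x

lemma eventually_alternatingIndicator_eq_zero (hA : Antitone A) {x : X} (hx : x ∉ ⋂ n, A n) :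
    ∀ᶠ n in atTop, alternatingIndicator A n x = 0 := by
  have h_indicator : ∀ᶠ n in atTop, (A n).indicator (1 : X → ℝ) x = 0 := by
    simpa only [indicator_of_notMem hx, tendsto_pure] using hA.tendsto_indicator A (1 : X → ℝ) x
  filter_upwards [h_indicator] with n hn
  rw [alternatingIndicator, hn, mul_zero]

lemma cauchySeq_alternatingIndicator (hA : Antitone A) {x : X} (hx : x ∉ ⋂ n, A n) :
    CauchySeq (fun n ↦ alternatingIndicator A n x) :=
  (tendsto_nhds_of_eventually_eq (eventually_alternatingIndicator_eq_zero hA hx)).cauchySeq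

lemma dist_alternatingIndicator_succ {m : ℕ} {x : X} (hm : x ∈ A m) (hm' : x ∈ A (m + 1)) :
    dist (alternatingIndicator A m x) (alternatingIndicator A (m + 1) x) = 2 := by
  have h_jump : (-1 : ℝ) ^ m - (-1) ^ (m + 1) = (-1) ^ m * 2 := by ring
  simp [alternatingIndicator, hm, hm', Real.dist_eq, h_jump]

lemma subset_fluctuationSet_alternatingIndicator (hA : Antitone A) {F : ℕ → ℕ} {M : ℕ}
    (hF : ∀ m ≤ M, m < F m) : A (M + 1) ⊆ fluctuationSet (alternatingIndicator A) 2 F M :=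
  fun _ hx ↦ mem_fluctuationSet_of_le_dist_succ hF fun _ hm ↦
    (dist_alternatingIndicator_succ (hA (by lia) hx) (hA (by lia) hx)).ge

lemma tendsto_measure_zero_of_convergesAUM_alternatingIndicator [MeasurableSpace X]
    {μ : Measure X} (hA : Antitone A)
    (h : ConvergesAUM μ (alternatingIndicator A)) : Tendsto (fun n ↦ μ (A n)) atTop (𝓝 0) := by
  refine ENNReal.tendsto_nhds_zero.2 fun δ hδ ↦ ?_
  obtain ⟨lam, -, hlam, hlamδ⟩ := ENNReal.lt_iff_exists_real_btwn.1 hδ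
  obtain ⟨M, hM⟩ := h lam (ENNReal.ofReal_pos.1 hlam) 2 two_pos (· + 1)
  filter_upwards [eventually_ge_atTop (M + 1)] with n hn
  calc
    μ (A n) ≤ μ (fluctuationSet (alternatingIndicator A) 2 (· + 1) M) :=
      measure_mono <| (hA hn).trans <|
        subset_fluctuationSet_alternatingIndicator hA fun m _ ↦ m.lt_succ_self
    _ ≤ δ := (hM.trans hlamδ).le

theorem stmt_18_general [MeasurableSpace X] {μ : Measure X} (hA : Antitone A)
    (hA_inter : ⋂ n, A n = ∅) (hA_measure : ¬ Tendsto (fun n ↦ μ (A n)) atTop (𝓝 0)) :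
    (∀ x, CauchySeq (fun n ↦ alternatingIndicator A n x)) ∧
      ¬ ConvergesAUM μ (alternatingIndicator A) :=
  ⟨fun x ↦ cauchySeq_alternatingIndicator hA (hA_inter ▸ notMem_empty x),
    fun h ↦ hA_measure (tendsto_measure_zero_of_convergesAUM_alternatingIndicator hA h)⟩

end AlternatingIndicator

lemma iInter_Ici_natCast {R : Type*} [Semiring R] [LinearOrder R] [IsStrictOrderedRing R]
    [Archimedean R] : ⋂ n : ℕ, Ici (n : R) = ∅ := by
  rw [← not_nonempty_iff_eq_empty, nonempty_iInter_Ici_iff]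
  exact not_bddAbove_of_tendsto_atTop tendsto_natCast_atTop_atTop

lemma not_tendsto_volume_Ici_natCast_zero :
    ¬ Tendsto (fun n : ℕ ↦ volume (Ici (n : ℝ))) atTop (𝓝 0) := by
  simp only [Real.volume_Ici, tendsto_const_nhds_iff, ENNReal.top_ne_zero, not_false_eq_true]

theorem stmt_18 :
    (∀ x : ℝ, CauchySeq (fun n : ℕ =>
        (-1 : ℝ) ^ n * (Set.Ici (n : ℝ)).indicator 1 x)) ∧
    ¬ (∀ lam : ℝ, 0 < lam → ∀ ε : ℝ, 0 < ε → ∀ F : ℕ → ℕ, ∃ M : ℕ,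
        volume {x : ℝ | ∀ m ≤ M, ∃ n ∈ Set.Icc m (F m), ∃ n' ∈ Set.Icc m (F m),
            ε ≤ |(-1 : ℝ) ^ n * (Set.Ici (n : ℝ)).indicator 1 x -
                  (-1 : ℝ) ^ n' * (Set.Ici (n' : ℝ)).indicator 1 x|}
          < ENNReal.ofReal lam) :=
  stmt_18_general Nat.mono_cast.Ici iInter_Ici_natCast not_tendsto_volume_Ici_natCast_zero
end

section
/- On ℝ with Lebesgue measure, the sequence h_n = χ_{[n, ∞)} (the indicator function of the interval [n, ∞)) converges AUM but does not converge AUM'. -/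
open MeasureTheory

/-! For a decreasing sequence of sets, the indicators are constant on `[0, F 0]` at a point of
`s (F 0)` and constant on `[F 0, F (F 0)]` at any other point. So `M = F 0` is a metastability
bound for every point at once, whatever the measure.

A limit `g`, in contrast, has to be close to `c` on most of some `s M` (test with `F = id`) and
close to `0` on most of the complement of `s k` (test with `F m = m + k`). Both cannot happen at the
same point, so `s M \ s k` has small measure, with `M` independent of `k`. -/

variable {α E : Type*}

section MetastabilitySets

variable [PseudoMetricSpace E]

/-- The points at which, for every `m ≤ M`, the sequence `f` oscillates by at least `ε` on the
interval `[m, F m]`: the points at which `M` is not a bound for the `F`-metastability of `f`. -/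
def oscillationSet (f : ℕ → α → E) (ε : ℝ) (F : ℕ → ℕ) (M : ℕ) : Set α :=
  {x | ∀ m ≤ M, ∃ n ∈ Set.Icc m (F m), ∃ n' ∈ Set.Icc m (F m), ε ≤ dist (f n x) (f n' x)}

/-- The points at which, for every `m ≤ M`, the sequence `f` is at distance at least `ε` from `g`
somewhere on the interval `[m, F m]`. -/
def deviationSet (f : ℕ → α → E) (g : α → E) (ε : ℝ) (F : ℕ → ℕ) (M : ℕ) : Set α :=
  {x | ∀ m ≤ M, ∃ n ∈ Set.Icc m (F m), ε ≤ dist (f n x) (g x)}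

/-- Almost uniform metastable pointwise (AUM) convergence of `f`. No measurability is built in: for
nonmeasurable sets, `μ` is the outer measure. -/
def AUMConvergent [MeasurableSpace α] (μ : Measure α) (f : ℕ → α → E) : Prop :=
  ∀ lam : ℝ, 0 < lam → ∀ ε : ℝ, 0 < ε → ∀ F : ℕ → ℕ, ∃ M : ℕ,
    μ (oscillationSet f ε F M) < ENNReal.ofReal lam

/-- AUM' convergence of `f` to the limit `g`. Measurability of `g`, which is part of the notion of
AUM' convergence, is left as a separate condition. -/
def AUMTendsto [MeasurableSpace α] (μ : Measure α) (f : ℕ → α → E) (g : α → E) : Prop :=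
  ∀ lam : ℝ, 0 < lam → ∀ ε : ℝ, 0 < ε → ∀ F : ℕ → ℕ, ∃ M : ℕ,
    μ (deviationSet f g ε F M) < ENNReal.ofReal lam

end MetastabilitySets

section AntitoneIndicators

variable [Zero E] {s : ℕ → Set α}

theorem oscillationSet_indicator_eq_empty [PseudoMetricSpace E] (hs : Antitone s) (φ : α → E)
    {ε : ℝ} (hε : 0 < ε) (F : ℕ → ℕ) :
    oscillationSet (fun n ↦ (s n).indicator φ) ε F (F 0) = ∅ := by
  refine Set.eq_empty_of_forall_notMem fun x hosc ↦ ?_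
  by_cases hx : x ∈ s (F 0)
  · obtain ⟨n, hn, n', hn', hle⟩ := hosc 0 (Nat.zero_le _)
    simp only [Set.indicator_of_mem (hs hn.2 hx), Set.indicator_of_mem (hs hn'.2 hx),
      dist_self] at hle
    exact hε.not_ge hle
  · obtain ⟨n, hn, n', hn', hle⟩ := hosc (F 0) le_rfl
    simp only [Set.indicator_of_notMem (fun h ↦ hx (hs hn.1 h)),
      Set.indicator_of_notMem (fun h ↦ hx (hs hn'.1 h)), dist_self] at hle
    exact hε.not_ge hle

theorem aumConvergent_indicator [PseudoMetricSpace E] [MeasurableSpace α] (μ : Measure α)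
    (hs : Antitone s) (φ : α → E) : AUMConvergent μ fun n ↦ (s n).indicator φ := by
  intro lam hlam ε hε F
  refine ⟨F 0, ?_⟩
  rwa [oscillationSet_indicator_eq_empty hs φ hε, measure_empty, ENNReal.ofReal_pos]

theorem sdiff_subset_deviationSet_union [PseudoMetricSpace E] (hs : Antitone s) (c : E) (g : α → E)
    (M k M' : ℕ) :
    s M \ s k ⊆ deviationSet (fun n ↦ (s n).indicator fun _ ↦ c) g (dist c 0 / 2) id M ∪
      deviationSet (fun n ↦ (s n).indicator fun _ ↦ c) g (dist c 0 / 2) (· + k) M' := by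
  rintro x ⟨hxM, hxk⟩
  rcases le_or_gt (dist c 0 / 2) (dist c (g x)) with hfar | hnear
  · refine Or.inl fun m hm ↦ ⟨m, ⟨le_rfl, le_rfl⟩, ?_⟩
    simpa only [Set.indicator_of_mem (hs hm hxM)] using hfar
  · refine Or.inr fun m _ ↦ ⟨m + k, ⟨Nat.le_add_right m k, le_rfl⟩, ?_⟩
    simp only [Set.indicator_of_notMem (fun h ↦ hxk (hs (Nat.le_add_left k m) h))]
    linarith [dist_triangle_right c 0 (g x)]

theorem AUMTendsto.exists_forall_measure_sdiff_lt [MetricSpace E] [MeasurableSpace α]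
    {μ : Measure α} {c : E} {g : α → E} (h : AUMTendsto μ (fun n ↦ (s n).indicator fun _ ↦ c) g)
    (hs : Antitone s) (hc : c ≠ 0) {lam : ℝ} (hlam : 0 < lam) :
    ∃ M, ∀ k, μ (s M \ s k) < ENNReal.ofReal lam := by
  have hε : 0 < dist c 0 / 2 := half_pos (dist_pos.mpr hc)
  obtain ⟨M, hM⟩ := h (lam / 2) (half_pos hlam) _ hε id
  refine ⟨M, fun k ↦ ?_⟩
  obtain ⟨M', hM'⟩ := h (lam / 2) (half_pos hlam) _ hε (· + k)
  calc
    μ (s M \ s k) ≤ _ := measure_mono (sdiff_subset_deviationSet_union hs c g M k M')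
    _ ≤ _ := measure_union_le _ _
    _ < ENNReal.ofReal (lam / 2) + ENNReal.ofReal (lam / 2) := ENNReal.add_lt_add hM hM'
    _ = ENNReal.ofReal lam := by
      rw [← ENNReal.ofReal_add (half_pos hlam).le (half_pos hlam).le, add_halves]

theorem stmt_19_general [MetricSpace E] [MeasurableSpace α] {μ : Measure α} (hs : Antitone s)
    {c : E} (hc : c ≠ 0) {δ : ℝ} (hδ : 0 < δ)
    (hμ : ∀ M, ∃ k, ENNReal.ofReal δ ≤ μ (s M \ s k)) :
    AUMConvergent μ (fun n ↦ (s n).indicator fun _ ↦ c) ∧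
      ¬ ∃ g, AUMTendsto μ (fun n ↦ (s n).indicator fun _ ↦ c) g := by
  refine ⟨aumConvergent_indicator μ hs _, fun ⟨g, hg⟩ ↦ ?_⟩
  obtain ⟨M, hM⟩ := hg.exists_forall_measure_sdiff_lt hs hc hδ
  obtain ⟨k, hk⟩ := hμ M
  exact (hM k).not_ge hk

end AntitoneIndicators

theorem antitone_Ici_natCast : Antitone fun n : ℕ ↦ Set.Ici (n : ℝ) :=
  antitone_Ici.comp_monotone Nat.mono_cast

theorem stmt_19 :
    (∀ lam : ℝ, 0 < lam → ∀ ε : ℝ, 0 < ε → ∀ F : ℕ → ℕ, ∃ M : ℕ,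
      volume {x : ℝ | ∀ m ≤ M, ∃ n ∈ Set.Icc m (F m), ∃ n' ∈ Set.Icc m (F m),
          ε ≤ |(Set.Ici (n : ℝ)).indicator 1 x -
                (Set.Ici (n' : ℝ)).indicator 1 x|} < ENNReal.ofReal lam) ∧
    ¬ (∃ g : ℝ → ℝ, Measurable g ∧
        ∀ lam : ℝ, 0 < lam → ∀ ε : ℝ, 0 < ε → ∀ F : ℕ → ℕ, ∃ M : ℕ,
          volume {x : ℝ | ∀ m ≤ M, ∃ n ∈ Set.Icc m (F m),
              ε ≤ |(Set.Ici (n : ℝ)).indicator 1 x - g x|} < ENNReal.ofReal lam) := by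
  have volume_gap (M : ℕ) :
      volume (Set.Ici (M : ℝ) \ Set.Ici ((M + 1 : ℕ) : ℝ)) = ENNReal.ofReal 1 := by simp
  obtain ⟨hconv, hdiv⟩ := stmt_19_general antitone_Ici_natCast (one_ne_zero (α := ℝ)) one_pos
    fun M ↦ ⟨M + 1, (volume_gap M).ge⟩
  exact ⟨hconv, fun ⟨g, _, hg⟩ ↦ hdiv ⟨g, hg⟩⟩
end
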